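/- For every integer x ≥ 1 there exists a simple outer 5-planar graph on n = 10x + 2 vertices with at least 37x + 1 = 3.7n − 6.4 edges. That is, there exist outer 5-planar graphs with n vertices and 3.7n − 6.4 edges. -/

import Mathlib

/-- `x` lies strictly between `a` and `b` in the cyclic order of `Fin n`
(going forward from `a` to `b` along the cycle). -/
def cycBtw (n : ℕ) (a b x : Fin n) : Prop :=
  0 < (x.val + n - a.val) % n ∧ (x.val + n - a.val) % n < (b.val + n - a.val) % n

/-- Two edges `e` and `f` cross in the cyclic order determined by the positions `σ`:
they have four distinct endpoints and the endpoints interleave, i.e. exactly one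
endpoint of `f` lies strictly between the endpoints of `e`. -/
def crossing (n : ℕ) (σ : Fin n → Fin n) (e f : Sym2 (Fin n)) : Prop :=
  ∃ a b c d : Fin n, e = s(a, b) ∧ f = s(c, d) ∧
    a ≠ b ∧ c ≠ d ∧ a ≠ c ∧ a ≠ d ∧ b ≠ c ∧ b ≠ d ∧
    (cycBtw n (σ a) (σ b) (σ c) ↔ ¬ cycBtw n (σ a) (σ b) (σ d))

/-- With respect to the cyclic order given by positions `σ`, every edge of `G`
is crossed by at most `k` other edges. -/
def OuterKPlanarOrd (n k : ℕ) (σ : Fin n → Fin n) (G : SimpleGraph (Fin n)) : Prop :=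
  ∀ e ∈ G.edgeSet, ({f ∈ G.edgeSet | crossing n σ e f}).ncard ≤ k

/-- `G` is outer `k`-planar: its vertices can be arranged in a cyclic order such
that every edge is crossed by at most `k` other edges. -/
def IsOuterKPlanar (n k : ℕ) (G : SimpleGraph (Fin n)) : Prop :=
  ∃ σ : Fin n ≃ Fin n, OuterKPlanarOrd n k (⇑σ) G

/-!
Cut the convex `12`-gon along a long diagonal into two heptagons. Complete graphs on both heptagons
have `41` edges together. The chords of a convex `K₇` with two and three vertices on their sides are
crossed six times; deleting two of these at an end of the common side leaves every other one with
at most five crossings. Doing so in both heptagons, at opposite ends of the common side, makes room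
for one more chord across it, with exactly five crossings: `38` edges in all.

Gluing two outer `k`-planar drawings along a hull edge creates no new crossings and identifies at
most one edge, so every further `12`-gon costs `10` vertices and gains `37` edges.
-/

open scoped Finset

section Drawing

/-- Two chords between points in convex position cross. A chord is encoded as the pair of its
endpoints, the smaller one first, where the order lists the points along the hull. -/
def Interleave {α : Type*} [LT α] (p q : α × α) : Prop :=
  (p.1 < q.1 ∧ q.1 < p.2 ∧ p.2 < q.2) ∨ (q.1 < p.1 ∧ p.1 < q.2 ∧ q.2 < p.2)

instance {α : Type*} [LT α] [DecidableLT α] (p q : α × α) : Decidable (Interleave p q) :=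
  inferInstanceAs (Decidable (_ ∨ _))

theorem interleave_comm {α : Type*} [LT α] {p q : α × α} : Interleave p q ↔ Interleave q p :=
  or_comm

theorem interleave_map_iff {α β : Type*} [LinearOrder α] [Preorder β] {f : α → β}
    (hf : StrictMono f) {p q : α × α} :
    Interleave (p.map f f) (q.map f f) ↔ Interleave p q := by
  simp only [Interleave, Prod.map_fst, Prod.map_snd, hf.lt_iff_lt]

variable {α β : Type*} [LinearOrder α] [LinearOrder β] {k : ℕ}

/-- An outer `k`-planar graph drawn on the points of a linear order in convex position, given by
its set of chords in the encoding of `Interleave`. -/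
structure IsOuterDrawing (k : ℕ) (E : Finset (α × α)) : Prop where
  fst_lt_snd : ∀ p ∈ E, p.1 < p.2
  card_interleave_le : ∀ p ∈ E, #{q ∈ E | Interleave p q} ≤ k

namespace IsOuterDrawing

theorem image {E : Finset (α × α)} (hE : IsOuterDrawing k E) {f : α → β} (hf : StrictMono f) :
    IsOuterDrawing k (E.image (Prod.map f f)) where
  fst_lt_snd := Finset.forall_mem_image.2 fun p hp => hf (hE.fst_lt_snd p hp)
  card_interleave_le := Finset.forall_mem_image.2 fun p hp => by
    simp only [Finset.filter_image, interleave_map_iff hf]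
    exact Finset.card_image_le.trans (hE.card_interleave_le p hp)

theorem union {E F : Finset (α × α)} (hE : IsOuterDrawing k E) (hF : IsOuterDrawing k F)
    (hEF : ∀ p ∈ E, ∀ q ∈ F, ¬ Interleave p q) : IsOuterDrawing k (E ∪ F) where
  fst_lt_snd := Finset.forall_mem_union.2 ⟨hE.fst_lt_snd, hF.fst_lt_snd⟩
  card_interleave_le := Finset.forall_mem_union.2
    ⟨fun p hp => by
      rw [Finset.filter_union, Finset.filter_false_of_mem (hEF p hp), Finset.union_empty]
      exact hE.card_interleave_le p hp,
    fun q hq => by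
      have hE_empty : {p ∈ E | Interleave q p} = ∅ :=
        Finset.filter_false_of_mem fun p hp h => hEF p hp q hq (interleave_comm.1 h)
      rw [Finset.filter_union, hE_empty, Finset.empty_union]
      exact hF.card_interleave_le q hq⟩

end IsOuterDrawing

end Drawing

section Glue

variable {a b k : ℕ}

/-- The position in the glued polygon of a vertex of the first polygon, an `(a + 2)`-gon. -/
def glueLeft (a b : ℕ) : Fin (a + 2) → Fin (a + b + 2) :=
  Fin.castLE (by omega)

/-- The position in the glued polygon of a vertex of the second polygon, a `(b + 2)`-gon: its side
`{0, 1}` is placed on the side `{0, a + 1}` of the first polygon. -/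
def glueRight (a b : ℕ) (j : Fin (b + 2)) : Fin (a + b + 2) :=
  ⟨if j.val = 0 then 0 else a + j, by split_ifs <;> omega⟩

theorem glueLeft_strictMono (a b : ℕ) : StrictMono (glueLeft a b) :=
  Fin.strictMono_castLE _

theorem glueRight_strictMono (a b : ℕ) : StrictMono (glueRight a b) := by
  intro i j hij
  simp only [glueRight, Fin.mk_lt_mk]
  split_ifs <;> omega

theorem not_interleave_glueLeft_glueRight (p : Fin (a + 2) × Fin (a + 2))
    (q : Fin (b + 2) × Fin (b + 2)) :
    ¬ Interleave (p.map (glueLeft a b) (glueLeft a b)) (q.map (glueRight a b) (glueRight a b)) := by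
  simp only [Interleave, Prod.map_fst, Prod.map_snd, glueLeft, glueRight, Fin.lt_def,
    Fin.val_castLE]
  split_ifs <;> omega

theorem eq_zero_last_of_map_glueLeft_eq_map_glueRight {p : Fin (a + 2) × Fin (a + 2)}
    {q : Fin (b + 2) × Fin (b + 2)} (hq : q.1 < q.2)
    (h : p.map (glueLeft a b) (glueLeft a b) = q.map (glueRight a b) (glueRight a b)) :
    p = (0, Fin.last (a + 1)) := by
  simp only [Prod.ext_iff, Prod.map_fst, Prod.map_snd, glueLeft, glueRight, Fin.ext_iff,
    Fin.val_castLE, Fin.val_zero, Fin.val_last] at h ⊢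
  split_ifs at h <;> omega

/-- The union of chord sets on an `(a + 2)`-gon and a `(b + 2)`-gon glued along a common side. -/
def glueChords (E : Finset (Fin (a + 2) × Fin (a + 2))) (F : Finset (Fin (b + 2) × Fin (b + 2))) :
    Finset (Fin (a + b + 2) × Fin (a + b + 2)) :=
  E.image (Prod.map (glueLeft a b) (glueLeft a b)) ∪
    F.image (Prod.map (glueRight a b) (glueRight a b))

variable {E : Finset (Fin (a + 2) × Fin (a + 2))} {F : Finset (Fin (b + 2) × Fin (b + 2))}

theorem IsOuterDrawing.glueChords (hE : IsOuterDrawing k E) (hF : IsOuterDrawing k F) :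
    IsOuterDrawing k (glueChords E F) := by
  refine (hE.image (glueLeft_strictMono a b)).union (hF.image (glueRight_strictMono a b)) ?_
  simp only [Finset.forall_mem_image]
  exact fun p _ q _ => not_interleave_glueLeft_glueRight p q

theorem card_add_card_le_card_glueChords_add_one (hF : ∀ q ∈ F, q.1 < q.2) :
    #E + #F ≤ #(glueChords E F) + 1 := by
  set E' := E.image (Prod.map (glueLeft a b) (glueLeft a b)) with hE'
  set F' := F.image (Prod.map (glueRight a b) (glueRight a b)) with hF'
  have hE_card : #E' = #E :=
    have hinj := (glueLeft_strictMono a b).injective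
    Finset.card_image_of_injective _ (hinj.prodMap hinj)
  have hF_card : #F' = #F :=
    have hinj := (glueRight_strictMono a b).injective
    Finset.card_image_of_injective _ (hinj.prodMap hinj)
  have hinter : E' ∩ F' ⊆ {(glueLeft a b 0, glueLeft a b (Fin.last (a + 1)))} := by
    simp only [hE', hF', Finset.subset_iff, Finset.mem_inter, Finset.mem_image,
      Finset.mem_singleton]
    rintro _ ⟨⟨p, -, rfl⟩, q, hq, hqp⟩
    rw [eq_zero_last_of_map_glueLeft_eq_map_glueRight (hF q hq) hqp.symm, Prod.map_apply]
  calc #E + #F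
      = #(glueChords E F) + #(E' ∩ F') := by
        rw [← hE_card, ← hF_card, ← Finset.card_union_add_card_inter, glueChords]
    _ ≤ #(glueChords E F) + 1 := by
        gcongr
        exact (Finset.card_le_card hinter).trans_eq (Finset.card_singleton _)

theorem IsOuterDrawing.exists_iterate_glueChords {c : ℕ} (hF : IsOuterDrawing k F)
    (hc : c + 1 ≤ #F) {x : ℕ} (hx : 1 ≤ x) :
    ∃ E : Finset (Fin (b * x + 2) × Fin (b * x + 2)), IsOuterDrawing k E ∧ c * x + 1 ≤ #E := by
  induction x, hx using Nat.le_induction with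
  | base =>
    rw [mul_one, mul_one]
    exact ⟨F, hF, hc⟩
  | succ x _ ih =>
    obtain ⟨E, hE, hcard⟩ := ih
    refine ⟨_, hE.glueChords hF, ?_⟩
    have hglue := card_add_card_le_card_glueChords_add_one (E := E) hF.fst_lt_snd
    rw [Nat.mul_succ]
    omega

end Glue

section ChordGraph

/-- The graph whose edges are the chords in `E`. -/
def chordGraph {α : Type*} (E : Finset (α × α)) : SimpleGraph α :=
  SimpleGraph.fromEdgeSet ((fun p : α × α => s(p.1, p.2)) '' E)

theorem edgeSet_chordGraph {α : Type*} {E : Finset (α × α)} (hE : ∀ p ∈ E, p.1 ≠ p.2) :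
    (chordGraph E).edgeSet = (fun p : α × α => s(p.1, p.2)) '' E := by
  rw [chordGraph, SimpleGraph.edgeSet_fromEdgeSet, sdiff_eq_left, Set.disjoint_left]
  rintro _ ⟨p, hp, rfl⟩
  exact hE p hp

theorem ncard_edgeSet_chordGraph {α : Type*} [Preorder α] {E : Finset (α × α)}
    (hE : ∀ p ∈ E, p.1 < p.2) : (chordGraph E).edgeSet.ncard = #E := by
  have hinj : Set.InjOn (fun p : α × α => s(p.1, p.2)) E := by
    intro p hp q hq hpq
    rcases Sym2.eq_iff.1 hpq with ⟨h₁, h₂⟩ | ⟨h₁, h₂⟩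
    · exact Prod.ext h₁ h₂
    · have hp_lt := hE p hp
      rw [h₁, h₂] at hp_lt
      exact absurd hp_lt (hE q hq).asymm
  rw [edgeSet_chordGraph fun p hp => (hE p hp).ne, hinj.ncard_image, Set.ncard_coe_finset]

theorem cycBtw_iff {n : ℕ} {a b x : Fin n} :
    cycBtw n a b x ↔ a < x ∧ x < b ∨ x < b ∧ b < a ∨ b < a ∧ a < x := by
  have hmod (y : Fin n) : (y.val + n - a.val) % n =
      if a ≤ y then y.val - a.val else y.val + n - a.val := by
    split_ifs with h
    · rw [Nat.sub_add_comm h, Nat.add_mod_right, Nat.mod_eq_of_lt (by omega)]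
    · exact Nat.mod_eq_of_lt (by omega)
  rw [cycBtw, hmod, hmod]
  split_ifs <;> omega

theorem interleave_of_crossing {n : ℕ} {p q : Fin n × Fin n} (hp : p.1 < p.2) (hq : q.1 < q.2)
    (h : crossing n id s(p.1, p.2) s(q.1, q.2)) : Interleave p q := by
  obtain ⟨a, b, c, d, hab, hcd, -, -, hac, had, hbc, hbd, h⟩ := h
  simp only [id, cycBtw_iff] at h
  unfold Interleave
  rcases Sym2.eq_iff.1 hab with ⟨rfl, rfl⟩ | ⟨rfl, rfl⟩ <;>
    rcases Sym2.eq_iff.1 hcd with ⟨rfl, rfl⟩ | ⟨rfl, rfl⟩ <;> omega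

theorem IsOuterDrawing.isOuterKPlanar_chordGraph {n k : ℕ} {E : Finset (Fin n × Fin n)}
    (hE : IsOuterDrawing k E) : IsOuterKPlanar n k (chordGraph E) := by
  have hedge := edgeSet_chordGraph fun p hp => (hE.fst_lt_snd p hp).ne
  refine ⟨Equiv.refl _, fun e he => ?_⟩
  obtain ⟨p, hp, rfl⟩ := hedge ▸ he
  have hcross : {f ∈ (chordGraph E).edgeSet | crossing n id s(p.1, p.2) f} ⊆
      (fun q : Fin n × Fin n => s(q.1, q.2)) '' {q | q ∈ E ∧ Interleave p q} := by
    rintro f ⟨hf, hpf⟩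
    obtain ⟨q, hq, rfl⟩ := hedge ▸ hf
    exact ⟨q, ⟨hq, interleave_of_crossing (hE.fst_lt_snd p hp) (hE.fst_lt_snd q hq) hpf⟩, rfl⟩
  calc {f ∈ (chordGraph E).edgeSet | crossing n id s(p.1, p.2) f}.ncard
      ≤ ((fun q : Fin n × Fin n => s(q.1, q.2)) '' {q | q ∈ E ∧ Interleave p q}).ncard :=
        Set.ncard_le_ncard hcross (Set.toFinite _)
    _ ≤ {q | q ∈ E ∧ Interleave p q}.ncard := Set.ncard_image_le (Set.toFinite _)
    _ = #{q ∈ E | Interleave p q} := by rw [← Set.ncard_coe_finset, Finset.coe_filter]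
    _ ≤ k := hE.card_interleave_le p hp

end ChordGraph

section DoubleHeptagon

/-- All chords of the heptagons `0, …, 6` and `6, …, 11, 0`, and the chord `(5, 11)` crossing
their common side `(0, 6)`, without two chords at vertex `6` of the first heptagon and, by the
half-turn symmetry `j ↦ j + 6`, two at vertex `0` of the second. -/
def doubleHeptagon : Finset (Fin 12 × Fin 12) :=
  Finset.univ.filter (fun p => p.1 < p.2 ∧
    (p.2 ≤ 6 ∨ 6 ≤ p.1 ∨ p.1 = 0 ∧ 6 ≤ p.2 ∨ p = (5, 11))) \
      {(2, 6), (3, 6), (0, 8), (0, 9)}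

set_option maxRecDepth 10000 in
theorem card_doubleHeptagon : #doubleHeptagon = 38 := by decide

set_option maxRecDepth 10000 in
theorem isOuterDrawing_doubleHeptagon : IsOuterDrawing 5 doubleHeptagon where
  fst_lt_snd := by decide
  card_interleave_le := by decide

end DoubleHeptagon

/-- For every `x ≥ 1` there exists an outer `5`-planar graph on `n = 10x + 2`
vertices with at least `37x + 1 = 3.7n - 6.4` edges. -/
theorem exists_dense_outer_five_planar (x : ℕ) (hx : 1 ≤ x) :
    ∃ G : SimpleGraph (Fin (10 * x + 2)), IsOuterKPlanar (10 * x + 2) 5 G ∧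
      37 * x + 1 ≤ G.edgeSet.ncard := by
  obtain ⟨E, hE, hcard⟩ :=
    isOuterDrawing_doubleHeptagon.exists_iterate_glueChords card_doubleHeptagon.ge hx
  refine ⟨chordGraph E, hE.isOuterKPlanar_chordGraph, ?_⟩
  rwa [ncard_edgeSet_chordGraph hE.fst_lt_snd]
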